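/- Assume ℓ(C) = 0, i.e. e_j ≥ 2 for all j. Let φ : S^{m+2} → S³ be the S-linear map φ(A_1,...,A_{m−1},a,b,c) = Σ_{j=1}^{m−1} A_j ρ_j + a σ^x + b σ^y + c σ^z. Then the kernel of φ is a free S-module with basis R_1,...,R_m, where for 1 ≤ j ≤ m−1 the vector R_j ∈ S^{m+2} has f_j in position j, zero in the other positions among the first m−1, and (−f_{j,x}, −f_{j,y}, −f_{j,z}) in the last three positions, and R_m = (−f_m, −f_m, ..., −f_m, −f_{m,x}, −f_{m,y}, −f_{m,z}). That is, ker φ equals the S-submodule generated by R_1,...,R_m, and R_1,...,R_m are linearly independent over S. (This gives the minimal resolution 0 → ⊕_{j=1}^m S(−d+2−e_j) → S(−d+2)^{m−1} ⊕ S(−d+1)³ of D₀(f).) -/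

import Mathlib

open MvPolynomial

noncomputable abbrev S : Type := MvPolynomial (Fin 3) ℂ

/-- The gradient `∇g = (g_x, g_y, g_z)` of a polynomial `g ∈ S = ℂ[x,y,z]`. -/
noncomputable def grad (g : S) : Fin 3 → S := fun t => pderiv t g

/-- The syzygy triple `ρ_j = Σ_{i≠j} (∏_{k≠i,j} f_k) (∇f_i × ∇f_j)`
of the 2-form `ω_j = df ∧ df_j/f_j`. -/
noncomputable def rho {m : ℕ} (F : Fin m → S) (j : Fin m) : Fin 3 → S :=
  ∑ i ∈ Finset.univ.erase j,
    (∏ k ∈ (Finset.univ.erase j).erase i, F k) • crossProduct (grad (F i)) (grad (F j))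

/-- The Jacobian syzygy module `D₀(f) = {(a,b,c) ∈ S³ : a f_x + b f_y + c f_z = 0}`. -/
noncomputable def D0 (f : S) : Submodule S (Fin 3 → S) where
  carrier := {v | ∑ t, v t * pderiv t f = 0}
  add_mem' {a b} ha hb := by
    simp only [Set.mem_setOf_eq, Pi.add_apply, add_mul, Finset.sum_add_distrib] at *
    rw [ha, hb, add_zero]
  zero_mem' := by simp
  smul_mem' c v hv := by
    simp only [Set.mem_setOf_eq, Pi.smul_apply, smul_eq_mul, mul_assoc, ← Finset.mul_sum] at *
    rw [hv, mul_zero]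

/-- The syzygy triple `σ^x = (0, f_z, −f_y)` of the 2-form `df ∧ dx`. -/
noncomputable def sigx (f : S) : Fin 3 → S := ![0, pderiv 2 f, -pderiv 1 f]
/-- The syzygy triple `σ^y = (−f_z, 0, f_x)` of the 2-form `df ∧ dy`. -/
noncomputable def sigy (f : S) : Fin 3 → S := ![-pderiv 2 f, 0, pderiv 0 f]
/-- The syzygy triple `σ^z = (f_y, −f_x, 0)` of the 2-form `df ∧ dz`. -/
noncomputable def sigz (f : S) : Fin 3 → S := ![pderiv 1 f, -pderiv 0 f, 0]

/-- The second-syzygy vectors `R_1, …, R_m ∈ S^{m+2}` (case `ℓ(C) = 0`): for `j ≤ m−1`,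
`R_j` has `f_j` in position `j`, zero elsewhere among the first `m−1` coordinates, and
`(−f_{j,x}, −f_{j,y}, −f_{j,z})` in the last three; `R_m = (−f_m, …, −f_m, −f_{m,x}, −f_{m,y}, −f_{m,z})`. -/
noncomputable def Rvec {m : ℕ} (F : Fin m → S) (j : Fin m) : (Fin (m - 1) ⊕ Fin 3) → S :=
  Sum.elim
    (fun i => (if (i : ℕ) = (j : ℕ) then F j else 0) + (if (j : ℕ) = m - 1 then -F j else 0))
    (fun t => -pderiv t (F j))


/-- A nonunit polynomial in three variables has a zero away from the origin. -/
lemma exists_zero_of_not_isUnit (g : S) (hg : ¬ IsUnit g) :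
    ∃ p : Fin 3 → ℂ, p ≠ 0 ∧ eval p g = 0 := by
  by_contra! hcon
  have key : ∀ t : Fin 3, ∃ n, g ∣ (X t : S) ^ n := by
    intro t
    have h : (X t : S) ∈ (Ideal.span {g}).radical := by
      rw [← vanishingIdeal_zeroLocus_eq_radical (K := ℂ)]
      intro p hp
      by_cases h0 : p = 0
      · simp [h0]
      · exact absurd (by simpa [aeval_eq_eval] using hp g (Ideal.mem_span_singleton_self g))
          (hcon p h0)
    obtain ⟨n, hn⟩ := h
    exact ⟨n, Ideal.mem_span_singleton.mp hn⟩
  obtain ⟨a, ha⟩ := key 0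
  obtain ⟨b, hb⟩ := key 1
  have hg0 : g ≠ 0 := by
    rintro rfl
    exact pow_ne_zero a (X_ne_zero (0 : Fin 3)) (zero_dvd_iff.mp ha)
  obtain ⟨q, hq, hqg⟩ := WfDvdMonoid.exists_irreducible_factor hg hg0
  have hqp := hq.prime
  have h0 : q ∣ (X 0 : S) := hqp.dvd_of_dvd_pow (hqg.trans ha)
  have h1 : q ∣ (X 1 : S) := hqp.dvd_of_dvd_pow (hqg.trans hb)
  have hX0 : Irreducible (X 0 : S) := (X_prime).irreducible
  have hass : Associated q (X 0 : S) := hq.associated_of_dvd hX0 h0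
  have h01 : (X 0 : S) ∣ X 1 := hass.symm.dvd.trans h1
  rw [X_dvd_X] at h01
  simp at h01

/-- A vector of polynomials with no common nonunit factor. -/
def Prim (u : Fin 3 → S) : Prop := ∀ g : S, (∀ t, g ∣ u t) → IsUnit g

lemma Prim.dvd {u : Fin 3 → S} (hu : Prim u) {a c : S} (h : ∀ t, a ∣ c * u t) : a ∣ c := by
  classical
  let _ : NormalizedGCDMonoid S := Classical.choice inferInstance
  have h1 : a ∣ Finset.univ.gcd (fun t => c * u t) := Finset.dvd_gcd fun t _ => h t
  have h2 := (Finset.gcd_mul_left' (s := Finset.univ) (f := u) c).dvd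
  have h3 : IsUnit (Finset.univ.gcd u) := hu _ fun t => Finset.gcd_dvd (Finset.mem_univ t)
  exact (h3.dvd_mul_right).mp (h1.trans h2)

lemma Prim.exists_mul {u w : Fin 3 → S} (hu : Prim u) (h : ∀ s t, u s * w t = u t * w s) :
    ∃ c : S, ∀ t, w t = c * u t := by
  obtain ⟨i, hi⟩ : ∃ i, u i ≠ 0 := by
    by_contra! h0
    exact not_isUnit_zero (hu 0 fun t => by simp [h0 t])
  have hd : u i ∣ w i := hu.dvd fun t => ⟨w t, by rw [h i t]; ring⟩
  obtain ⟨c, hc⟩ := hd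
  refine ⟨c, fun t => mul_left_cancel₀ hi ?_⟩
  rw [h i t, hc]; ring

lemma pderiv_finset_prod {ι : Type*} [DecidableEq ι] (s : Finset ι) (F : ι → S) (t : Fin 3) :
    pderiv t (∏ i ∈ s, F i) = ∑ i ∈ s, (∏ k ∈ s.erase i, F k) * pderiv t (F i) := by
  induction s using Finset.induction_on with
  | empty => simp
  | insert a s ha ih =>
    rw [Finset.prod_insert ha, Derivation.leibniz, ih, Finset.sum_insert ha,
      Finset.erase_insert ha, smul_eq_mul, smul_eq_mul, Finset.mul_sum, add_comm]
    congr 1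
    refine Finset.sum_congr rfl fun i hi => ?_
    have hia : a ≠ i := by rintro rfl; exact ha hi
    rw [Finset.erase_insert_of_ne hia, Finset.prod_insert (by simp [ha])]
    ring

lemma prim_grad {g : S} (h : ∀ p : Fin 3 → ℂ, (∀ t, eval p (pderiv t g) = 0) → p = 0) :
    Prim (grad g) := by
  intro q hq
  by_contra hn
  obtain ⟨p, hp0, hp⟩ := exists_zero_of_not_isUnit q hn
  refine hp0 (h p fun t => ?_)
  obtain ⟨c, hc⟩ := hq t
  have hc' : pderiv t g = q * c := hc
  rw [hc', map_mul, hp, zero_mul]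

lemma relPrime_of_nc {a b : S} (h : ∀ p : Fin 3 → ℂ, p ≠ 0 → eval p a = 0 → eval p b = 0 →
      LinearIndependent ℂ ![fun t => eval p (pderiv t a), fun t => eval p (pderiv t b)]) :
    IsRelPrime a b := by
  rintro g ⟨c, rfl⟩ ⟨d, rfl⟩
  by_contra hn
  obtain ⟨p, hp0, hp⟩ := exists_zero_of_not_isUnit g hn
  have hl := h p hp0 (by simp [hp]) (by simp [hp])
  rw [LinearIndependent.pair_iff] at hl
  have h1 := hl (eval p d) (-eval p c) (by
    ext t
    simp [Derivation.leibniz, hp]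
    ring)
  have h2 := hl 1 0 (by
    ext t
    have : eval p c = 0 := by simpa using h1.2
    simp [Derivation.leibniz, hp, this])
  simp at h2

section core

variable {m : ℕ} (F : Fin m → S)

/-- The product of all the `F k` with `k ≠ j`. -/
noncomputable def cof (j : Fin m) : S := ∏ k ∈ Finset.univ.erase j, F k

lemma cof_mul (j : Fin m) : F j * cof F j = ∏ i, F i :=
  Finset.mul_prod_erase _ _ (Finset.mem_univ j)

lemma pderiv_prod_eq (t : Fin 3) :
    pderiv t (∏ i, F i) = ∑ i, cof F i * pderiv t (F i) :=
  pderiv_finset_prod _ _ _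

lemma grad_prod : grad (∏ i, F i) = ∑ i, cof F i • grad (F i) := by
  ext1 t
  simp [grad, pderiv_prod_eq]

lemma mul_rho (j : Fin m) :
    F j • rho F j = crossProduct (grad (∏ i, F i)) (grad (F j)) := by
  rw [grad_prod, rho, Finset.smul_sum, map_sum, LinearMap.sum_apply,
    ← Finset.add_sum_erase _ _ (Finset.mem_univ j)]
  simp only [map_smul, LinearMap.smul_apply, cross_self, smul_zero, zero_add]
  refine Finset.sum_congr rfl fun i hi => ?_
  rw [smul_smul, cof]
  congr 1
  have hij : j ≠ i := (Finset.ne_of_mem_erase hi).symm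
  rw [Finset.erase_right_comm, Finset.mul_prod_erase]
  simp [hij]

lemma sig_eq (f : S) (a : Fin 3 → S) :
    a 0 • sigx f + a 1 • sigy f + a 2 • sigz f = crossProduct (grad f) a := by
  rw [cross_apply]
  ext1 t
  fin_cases t <;> simp [sigx, sigy, sigz, grad] <;> ring

lemma cross_eq_zero_iff' (u w : Fin 3 → S) :
    crossProduct u w = 0 ↔ ∀ s t, u s * w t = u t * w s := by
  rw [cross_apply]
  constructor
  · intro h
    have h0 := congrFun h 0
    have h1 := congrFun h 1
    have h2 := congrFun h 2
    simp at h0 h1 h2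
    intro s t
    fin_cases s <;> fin_cases t <;> simp <;> first | linear_combination h0 | linear_combination h1 | linear_combination h2 | linear_combination -h0 | linear_combination -h1 | linear_combination -h2
  · intro h
    ext1 t
    fin_cases t
    · simpa using sub_eq_zero.mpr (h 1 2)
    · simpa using sub_eq_zero.mpr (h 2 0)
    · simpa using sub_eq_zero.mpr (h 0 1)

lemma relPrime_cof (hrel : ∀ i j, i ≠ j → IsRelPrime (F i) (F j)) (j : Fin m) :
    IsRelPrime (F j) (cof F j) :=
  IsRelPrime.prod_right fun i hi => hrel j i (Finset.ne_of_mem_erase hi).symm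

lemma dvd_cof {i j : Fin m} (h : i ≠ j) : F j ∣ cof F i :=
  Finset.dvd_prod_of_mem _ (by simp [h.symm])

lemma prim_grad_prod (hm : 0 < m) (e : Fin m → ℕ) (he : ∀ j, 1 ≤ e j)
    (hhom : ∀ j, (F j).IsHomogeneous (e j))
    (hprim : ∀ j, Prim (grad (F j)))
    (hrel : ∀ i j, i ≠ j → IsRelPrime (F i) (F j)) (hne : ∏ i, F i ≠ 0) :
    Prim (grad (∏ i, F i)) := by
  intro g hg
  by_contra hn
  have hd : (∏ i, F i).IsHomogeneous (∑ i, e i) :=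
    IsHomogeneous.prod _ _ _ fun i _ => hhom i
  have hdpos : (∑ i, e i) ≠ 0 := by
    have := Finset.single_le_sum (f := e) (fun i _ => Nat.zero_le _) (Finset.mem_univ ⟨0, hm⟩)
    have := he ⟨0, hm⟩
    omega
  have hdvd : g ∣ ∏ i, F i := by
    have h1 : g ∣ (∑ i, e i) • ∏ i, F i := by
      rw [← hd.sum_X_mul_pderiv]
      exact Finset.dvd_sum fun t _ => Dvd.dvd.mul_left (hg t) _
    have hu : IsUnit (C ((∑ i, e i : ℕ) : ℂ) : S) :=
      (isUnit_iff_ne_zero.mpr (Nat.cast_ne_zero.mpr hdpos)).map C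
    rw [nsmul_eq_mul, ← map_natCast (C : ℂ →+* S)] at h1
    exact hu.dvd_mul_left.mp h1
  have hg0 : g ≠ 0 := fun h => hne (zero_dvd_iff.mp (h ▸ hdvd))
  obtain ⟨q, hq, hqg⟩ := WfDvdMonoid.exists_irreducible_factor hn hg0
  have hqp := hq.prime
  obtain ⟨j, -, hj⟩ := hqp.exists_mem_finset_dvd (hqg.trans hdvd)
  have hqc : ¬ q ∣ cof F j := fun h => hq.not_isUnit (relPrime_cof F hrel j hj h)
  refine hq.not_isUnit (hprim j q fun t => ?_)
  have h2 : q ∣ cof F j * pderiv t (F j) := by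
    have h3 := hqg.trans (hg t)
    simp only [grad] at h3
    rw [pderiv_prod_eq, ← Finset.add_sum_erase _ _ (Finset.mem_univ j)] at h3
    refine (dvd_add_left (Finset.dvd_sum fun i hi => ?_)).mp h3
    exact ((hj.trans (dvd_cof F (Finset.ne_of_mem_erase hi)))).mul_right _
  exact (hqp.dvd_or_dvd h2).resolve_left hqc

end core

/-- `Rvec` with the index type `Fin n` in place of `Fin (n + 1 - 1)`. -/
noncomputable def Rv {n : ℕ} (F : Fin (n + 1) → S) (j : Fin (n + 1)) : Fin n ⊕ Fin 3 → S :=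
  Rvec F j

lemma Rvec_comb {n : ℕ} (F B : Fin (n + 1) → S) :
    (∑ j, B j • Rv F j) =
      Sum.elim (fun i => F i.castSucc * B i.castSucc - F (Fin.last n) * B (Fin.last n))
        (fun t => -∑ j, B j * pderiv t (F j)) := by
  funext x
  rw [Finset.sum_apply]
  rcases x with i | t
  · rw [Fin.sum_univ_castSucc]
    have h1 : ∀ j : Fin n, (j : ℕ) ≠ n := fun j => j.2.ne
    simp [Rv, Rvec, h1, ← Fin.ext_iff]
    ring
  · simp [Rv, Rvec, Finset.sum_neg_distrib]

/-- The key identity. -/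
lemma key_identity {n : ℕ} (F B : Fin (n + 1) → S) (A : Fin n → S) (h v : S) (t : Fin 3)
    (hA : ∀ j, A j = h + F j.castSucc * B j.castSucc)
    (h0 : 0 = h + F (Fin.last n) * B (Fin.last n)) :
    (∏ i, F i) * v + ∑ j, A j * (cof F j.castSucc * pderiv t (F j.castSucc)) =
      h * pderiv t (∏ i, F i) + (∏ i, F i) * (v + ∑ j, B j * pderiv t (F j)) := by
  have e1 : ∑ j, A j * (cof F j.castSucc * pderiv t (F j.castSucc)) =
      ∑ j, (h + F j * B j) * (cof F j * pderiv t (F j)) := by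
    rw [Fin.sum_univ_castSucc, ← h0]
    simp [hA]
  rw [e1, pderiv_prod_eq, mul_add, Finset.mul_sum, Finset.mul_sum, add_left_comm,
    ← Finset.sum_add_distrib]
  congr 1
  refine Finset.sum_congr rfl fun j _ => ?_
  rw [← cof_mul F j]
  ring

theorem core_kernel
    (n : ℕ) (F : Fin (n + 1) → S) (e : Fin (n + 1) → ℕ)
    (he : ∀ j, 1 ≤ e j)
    (hhom : ∀ j, (F j).IsHomogeneous (e j))
    (hsmooth : ∀ j, ∀ p : Fin 3 → ℂ,
      (∀ t, eval p (pderiv t (F j)) = 0) → p = 0)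
    (hnc : ∀ i j : Fin (n + 1), i ≠ j → ∀ p : Fin 3 → ℂ, p ≠ 0 →
      eval p (F i) = 0 → eval p (F j) = 0 →
      LinearIndependent ℂ
        ![fun t => eval p (pderiv t (F i)), fun t => eval p (pderiv t (F j))]) :
    {A : (Fin n ⊕ Fin 3) → S |
        (∑ j : Fin n, A (Sum.inl j) • rho F j.castSucc)
          + A (Sum.inr 0) • sigx (∏ i, F i) + A (Sum.inr 1) • sigy (∏ i, F i)
          + A (Sum.inr 2) • sigz (∏ i, F i) = 0}
      = (Submodule.span S (Set.range (Rv F)) : Set ((Fin n ⊕ Fin 3) → S)) ∧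
    LinearIndependent S (Rv F) := by
  have hprim : ∀ j, Prim (grad (F j)) := fun j => prim_grad (hsmooth j)
  have hrel : ∀ i j, i ≠ j → IsRelPrime (F i) (F j) := fun i j hij =>
    relPrime_of_nc (hnc i j hij)
  have hF0 : ∀ j, F j ≠ 0 := by
    intro j h
    refine not_isUnit_zero (hprim j 0 fun t => ?_)
    simp [grad, h]
  have hne : ∏ i, F i ≠ 0 := Finset.prod_ne_zero_iff.mpr fun i _ => hF0 i
  have hpf := prim_grad_prod F (Nat.succ_pos n) e he hhom hprim hrel hne
  -- reformulation of the kernel condition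
  have hker : ∀ A : (Fin n ⊕ Fin 3) → S,
      ((∑ j : Fin n, A (Sum.inl j) • rho F j.castSucc)
          + A (Sum.inr 0) • sigx (∏ i, F i) + A (Sum.inr 1) • sigy (∏ i, F i)
          + A (Sum.inr 2) • sigz (∏ i, F i) = 0) ↔
      crossProduct (grad (∏ i, F i)) (fun t => (∏ i, F i) * A (Sum.inr t) +
        ∑ j : Fin n, A (Sum.inl j) * (cof F j.castSucc * pderiv t (F j.castSucc))) = 0 := by
    intro A
    have hw : (fun t => (∏ i, F i) * A (Sum.inr t) +
        ∑ j : Fin n, A (Sum.inl j) * (cof F j.castSucc * pderiv t (F j.castSucc))) =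
        (∏ i, F i) • (fun t => A (Sum.inr t)) +
        ∑ j : Fin n, (A (Sum.inl j) * cof F j.castSucc) • grad (F j.castSucc) := by
      ext1 t
      simp [grad, mul_assoc]
    rw [hw, map_add, map_smul, map_sum, ← sig_eq]
    simp only [map_smul]
    have h2 : ∀ j : Fin n, (A (Sum.inl j) * cof F j.castSucc) •
        crossProduct (grad (∏ i, F i)) (grad (F j.castSucc)) =
        (∏ i, F i) • (A (Sum.inl j) • rho F j.castSucc) := by
      intro j
      rw [← mul_rho, smul_smul, smul_smul, ← cof_mul F j.castSucc]
      congr 1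
      ring
    simp only [h2]
    rw [← Finset.smul_sum, ← smul_add, smul_eq_zero, or_iff_right hne]
    rw [add_comm, ← add_assoc, ← add_assoc]
    constructor <;> intro h <;> rw [← h] <;> abel
  constructor
  · ext A
    rw [Set.mem_setOf_eq, hker, SetLike.mem_coe, Submodule.mem_span_range_iff_exists_fun,
      cross_eq_zero_iff']
    constructor
    · intro hA
      obtain ⟨h, hh⟩ := hpf.exists_mul hA
      -- extend `A` by zero
      have hdiv : ∀ (j : Fin (n + 1)) (a : S),
          (∀ t, F j ∣ a * (cof F j * pderiv t (F j)) - h * pderiv t (∏ i, F i)) →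
          ∃ b, a = h + F j * b := by
        intro j a ha
        have h1 : ∀ t, F j ∣ (a - h) * cof F j * pderiv t (F j) := by
          intro t
          have h2 := ha t
          rw [pderiv_prod_eq, ← Finset.add_sum_erase _ _ (Finset.mem_univ j)] at h2
          have h3 : F j ∣ ∑ i ∈ Finset.univ.erase j, cof F i * pderiv t (F i) :=
            Finset.dvd_sum fun i hi => (dvd_cof F (Finset.ne_of_mem_erase hi)).mul_right _
          have h4 := dvd_add h2 (h3.mul_left h)
          convert h4 using 1
          ring
        have h5 : F j ∣ (a - h) * cof F j := (hprim j).dvd h1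
        obtain ⟨b, hb⟩ := (relPrime_cof F hrel j).dvd_of_dvd_mul_right h5
        exact ⟨b, by rw [← hb]; ring⟩
      have hfj : ∀ j, F j ∣ ∏ i, F i := fun j => ⟨_, (cof_mul F j).symm⟩
      have hex : ∀ j : Fin (n + 1), ∃ b,
          (Fin.lastCases 0 (fun i => A (Sum.inl i)) j : S) = h + F j * b := by
        intro j
        refine hdiv j _ fun t => ?_
        have hh' : _ = h * pderiv t (∏ i, F i) := hh t
        rw [← hh']
        refine Fin.lastCases ?_ (fun i => ?_) j
        · rw [Fin.lastCases_last, zero_mul, zero_sub, dvd_neg]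
          refine dvd_add ((hfj _).mul_right _) (Finset.dvd_sum fun k _ => ?_)
          exact ((dvd_cof F (Fin.castSucc_lt_last k).ne).mul_right _).mul_left _
        · rw [Fin.lastCases_castSucc, ← Finset.add_sum_erase _ _ (Finset.mem_univ i)]
          have h6 : F i.castSucc ∣ (∏ i, F i) * A (Sum.inr t) + ∑ k ∈ Finset.univ.erase i,
              A (Sum.inl k) * (cof F k.castSucc * pderiv t (F k.castSucc)) := by
            refine dvd_add ((hfj _).mul_right _) (Finset.dvd_sum fun k hk => ?_)
            have hki : k.castSucc ≠ i.castSucc := fun h =>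
              (Finset.ne_of_mem_erase hk) (Fin.castSucc_injective _ h)
            exact ((dvd_cof F hki).mul_right _).mul_left _
          rw [← dvd_neg] at h6
          convert h6 using 1
          ring
      choose B hB using hex
      have hBl : 0 = h + F (Fin.last n) * B (Fin.last n) := by
        simpa using hB (Fin.last n)
      have hBc : ∀ j : Fin n, A (Sum.inl j) = h + F j.castSucc * B j.castSucc := by
        intro j
        simpa using hB j.castSucc
      refine ⟨B, ?_⟩
      rw [Rvec_comb]
      funext x
      rcases x with i | t
      · simp only [Sum.elim_inl]
        rw [hBc i]
        linear_combination hBl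
      · simp only [Sum.elim_inr]
        have h7 := key_identity F B (fun j => A (Sum.inl j)) h (A (Sum.inr t)) t hBc hBl
        have hh' : _ = h * pderiv t (∏ i, F i) := hh t
        rw [hh'] at h7
        have h8 : (∏ i, F i) * (A (Sum.inr t) + ∑ j, B j * pderiv t (F j)) = 0 := by
          linear_combination -h7
        have h9 := (mul_eq_zero.mp h8).resolve_left hne
        linear_combination -h9
    · rintro ⟨B, rfl⟩
      rw [Rvec_comb]
      have h7 : ∀ t, _ := fun t => key_identity F B
        (fun i => F i.castSucc * B i.castSucc - F (Fin.last n) * B (Fin.last n))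
        (-(F (Fin.last n) * B (Fin.last n))) (-∑ j, B j * pderiv t (F j)) t
        (fun j => by ring) (by ring)
      intro s t
      simp only [Sum.elim_inl, Sum.elim_inr]
      rw [h7, h7]
      simp only [grad]
      ring
  · rw [Fintype.linearIndependent_iff]
    intro B hB
    rw [Rvec_comb] at hB
    have h1 : ∀ i : Fin n, F i.castSucc * B i.castSucc = F (Fin.last n) * B (Fin.last n) :=
      fun i => sub_eq_zero.mp (congrFun hB (Sum.inl i))
    have h1' : ∀ j, F j * B j = F (Fin.last n) * B (Fin.last n) := by
      intro j
      refine Fin.lastCases rfl h1 j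
    have h2 : ∀ t, ∑ j, B j * pderiv t (F j) = 0 := fun t =>
      neg_eq_zero.mp (congrFun hB (Sum.inr t))
    have h3 : ∑ j, B j * ((e j : S) * F j) = 0 := by
      have : ∀ j, (e j : S) * F j = ∑ t, X t * pderiv t (F j) := by
        intro j
        rw [(hhom j).sum_X_mul_pderiv, nsmul_eq_mul]
      simp only [this, Finset.mul_sum]
      rw [Finset.sum_comm]
      refine Finset.sum_eq_zero fun t _ => ?_
      have h4 := h2 t
      calc _ = X t * ∑ j, B j * pderiv t (F j) := by
            rw [Finset.mul_sum]
            exact Finset.sum_congr rfl fun j _ => by ring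
        _ = 0 := by rw [h4, mul_zero]
    have h5 : ((∑ j, e j : ℕ) : S) * (F (Fin.last n) * B (Fin.last n)) = 0 := by
      rw [← h3, Nat.cast_sum, Finset.sum_mul]
      refine Finset.sum_congr rfl fun j _ => ?_
      rw [← h1' j]
      ring
    have h6 : ((∑ j, e j : ℕ) : S) ≠ 0 := by
      rw [Nat.cast_ne_zero]
      have := Finset.single_le_sum (f := e) (fun i _ => Nat.zero_le _) (Finset.mem_univ 0)
      have := he 0
      omega
    have h7 := (mul_eq_zero.mp h5).resolve_left h6
    intro j
    have h8 := h1' j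
    rw [h7] at h8
    exact (mul_eq_zero.mp h8).resolve_left (hF0 j)

/-- if `ℓ(C) = 0` (all `e_j ≥ 2`), the kernel of
`φ : S^{m+2} → S³`, `φ(A_1,…,A_{m−1},a,b,c) = Σ A_j ρ_j + a σ^x + b σ^y + c σ^z`,
is the free `S`-module with basis `R_1, …, R_m`. -/
theorem kernel_caseL0
    (m : ℕ) (hm : 4 ≤ m) (F : Fin m → S) (e : Fin m → ℕ)
    (he : ∀ j, 1 ≤ e j)
    (hhom : ∀ j, (F j).IsHomogeneous (e j))
    (hsmooth : ∀ j, ∀ p : Fin 3 → ℂ,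
      (∀ t, eval p (pderiv t (F j)) = 0) → p = 0)
    (hnc : ∀ i j : Fin m, i ≠ j → ∀ p : Fin 3 → ℂ, p ≠ 0 →
      eval p (F i) = 0 → eval p (F j) = 0 →
      LinearIndependent ℂ
        ![fun t => eval p (pderiv t (F i)), fun t => eval p (pderiv t (F j))])
    (htriple : ∀ i j k : Fin m, i ≠ j → i ≠ k → j ≠ k → ∀ p : Fin 3 → ℂ, p ≠ 0 →
      ¬(eval p (F i) = 0 ∧ eval p (F j) = 0 ∧ eval p (F k) = 0))
    (hl0 : ∀ j, 2 ≤ e j) :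
    {A : (Fin (m - 1) ⊕ Fin 3) → S |
        (∑ j : Fin (m - 1), A (Sum.inl j) • rho F (Fin.castLE (Nat.sub_le m 1) j))
          + A (Sum.inr 0) • sigx (∏ i, F i) + A (Sum.inr 1) • sigy (∏ i, F i)
          + A (Sum.inr 2) • sigz (∏ i, F i) = 0}
      = (Submodule.span S (Set.range (Rvec F)) : Set ((Fin (m - 1) ⊕ Fin 3) → S)) ∧
    LinearIndependent S (Rvec F) := by
  obtain ⟨n, rfl⟩ : ∃ n, m = n + 1 := ⟨m - 1, by omega⟩
  exact core_kernel n F e he hhom hsmooth hnc
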